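/- Let 𝒳, 𝒴 be Polish spaces, r ∈ [1,∞), μ ∈ 𝒫_r(𝒳), ν ∈ 𝒫_r(𝒴), and let C : 𝒳 × 𝒫_r(𝒴) → ℝ ∪ {+∞} be measurable, bounded below by −K(1 + d_𝒳(x,x₀)^r + 𝒲_r(p,δ_{y₀})^r), and such that for every x ∈ 𝒳 one has ∫ C(x,q) Q(dq) ≤ C(x, I(Q)) for all Q ∈ 𝒫_r(𝒫_r(𝒴)). Then C̃(x,p) := inf{ ∫ C(x,q) Q(dq) : Q ∈ 𝒫_r(𝒫_r(𝒴)), I(Q) = p } satisfies C̃(x,p) = ∫ C(x,δ_y) p(dy) for all (x,p) ∈ 𝒳 × 𝒫_r(𝒴); consequently inf_{P ∈ Λ(μ,ν)} ∫ C(x,p) P(dx,dp) = inf_{π ∈ Π(μ,ν)} ∫ C(x,δ_y) π(dx,dy), i.e. the relaxed weak transport problem reduces to a classical optimal transport problem with cost c(x,y) := C(x,δ_y). -/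

import Mathlib

open MeasureTheory Set Filter
open scoped ENNReal NNReal Topology RealInnerProductSpace

noncomputable section

namespace WOT

/-- The set of couplings of `μ` and `ν`. -/
def Couplings {X Y : Type*} [MeasurableSpace X] [MeasurableSpace Y]
    (μ : Measure X) (ν : Measure Y) : Set (Measure (X × Y)) :=
  {π | π.map Prod.fst = μ ∧ π.map Prod.snd = ν}

/-- `K` is a disintegration of `π` with respect to its first marginal `μ`. -/
def IsDisint {X Y : Type*} [MeasurableSpace X] [MeasurableSpace Y]
    (π : Measure (X × Y)) (μ : Measure X) (K : X → Measure Y) : Prop :=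
  Measurable K ∧ (∀ x, IsProbabilityMeasure (K x)) ∧
    ∀ s : Set (X × Y), MeasurableSet s → π s = ∫⁻ x, K x (Prod.mk x ⁻¹' s) ∂μ

/-- The intensity `I(Q)` of a measure on measures. -/
def intensity {Y : Type*} [MeasurableSpace Y] (Q : Measure (Measure Y)) : Measure Y :=
  Q.join

/-- The intensity map `Î`. -/
def intensityHat {X Y : Type*} [MeasurableSpace X] [MeasurableSpace Y]
    (P : Measure (X × Measure Y)) : Measure (X × Y) :=
  P.bind fun xp => (Measure.dirac xp.1).prod xp.2

/-- `Λ(μ,ν)`, the set of probability measures on `X × 𝒫(Y)` whose intensity is a coupling. -/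
def Lambda {X Y : Type*} [MeasurableSpace X] [MeasurableSpace Y]
    (μ : Measure X) (ν : Measure Y) : Set (Measure (X × Measure Y)) :=
  {P | IsProbabilityMeasure P ∧ (∀ᵐ xp ∂P, IsProbabilityMeasure xp.2) ∧
    intensityHat P ∈ Couplings μ ν}

/-- Finite `r`-th moment. -/
def FinMom {X : Type*} [MeasurableSpace X] [PseudoMetricSpace X]
    (r : ℝ) (x₀ : X) (μ : Measure X) : Prop :=
  ∫⁻ x, ENNReal.ofReal (dist x x₀ ^ r) ∂μ < ⊤

/-- The growth class `Φ_r`. -/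
def PhiR {X : Type*} [PseudoMetricSpace X] (r : ℝ) (x₀ : X) : Set (X → ℝ) :=
  {φ | Continuous φ ∧ ∃ K : ℝ, ∀ x, |φ x| ≤ K * (1 + dist x x₀ ^ r)}

/-- The `r`-Wasserstein distance (valued in `ℝ≥0∞`). -/
def Wr {Y : Type*} [MeasurableSpace Y] [PseudoMetricSpace Y]
    (r : ℝ) (p q : Measure Y) : ℝ≥0∞ :=
  ⨅ π ∈ Couplings p q, (∫⁻ z : Y × Y, ENNReal.ofReal (dist z.1 z.2 ^ r) ∂π) ^ (1 / r)

/-- `𝒫_r(Y)`: probability measures with finite `r`-th moment. -/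
def Pr {Y : Type*} [MeasurableSpace Y] [PseudoMetricSpace Y] (r : ℝ) (y₀ : Y) :
    Set (Measure Y) :=
  {p | IsProbabilityMeasure p ∧ FinMom r y₀ p}

/-- `𝒫_r(𝒫_r(Y))`: probability measures on `𝒫_r(Y)` with finite `r`-th moment w.r.t. `𝒲_r`. -/
def PrP {Y : Type*} [MeasurableSpace Y] [PseudoMetricSpace Y] (r : ℝ) (y₀ : Y) :
    Set (Measure (Measure Y)) :=
  {Q | IsProbabilityMeasure Q ∧ (∀ᵐ p ∂Q, p ∈ Pr r y₀) ∧
    ∫⁻ p, Wr r p (Measure.dirac y₀) ^ r ∂Q < ⊤}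

/-- The positive part of an extended real, valued in `ℝ≥0∞`. -/
def epos (e : EReal) : ℝ≥0∞ := if e = ⊤ then ⊤ else ENNReal.ofReal e.toReal

/-- Extended-real integral: positive part minus negative part (with value `⊥` when
both parts are infinite, i.e. when the integral is not well-defined). -/
def eInt {X : Type*} [MeasurableSpace X] (f : X → EReal) (μ : Measure X) : EReal :=
  ((∫⁻ x, epos (f x) ∂μ : ℝ≥0∞) : EReal) - ((∫⁻ x, epos (-(f x)) ∂μ : ℝ≥0∞) : EReal)

/-- Extended-real integral with the opposite (`⊤`) convention for ill-defined integrals. -/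
def eIntU {X : Type*} [MeasurableSpace X] (f : X → EReal) (μ : Measure X) : EReal :=
  -eInt (fun x => -(f x)) μ

/-- The extended-real integral is well-defined. -/
def eIntWellDef {X : Type*} [MeasurableSpace X] (f : X → EReal) (μ : Measure X) : Prop :=
  (∫⁻ x, epos (f x) ∂μ ≠ ⊤) ∨ (∫⁻ x, epos (-(f x)) ∂μ ≠ ⊤)

/-- Convergence in the `r`-Wasserstein distance. -/
def WrTendsto {Y : Type*} [MeasurableSpace Y] [PseudoMetricSpace Y]
    (r : ℝ) (ps : ℕ → Measure Y) (p : Measure Y) : Prop :=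
  Tendsto (fun n => Wr r (ps n) p) atTop (nhds 0)

/-- (Sequential) lower semicontinuity on `𝒫_r(Y)` w.r.t. `𝒲_r`. -/
def LscWr1 {Y : Type*} [MeasurableSpace Y] [PseudoMetricSpace Y]
    (r : ℝ) (y₀ : Y) (G : Measure Y → EReal) : Prop :=
  ∀ (p : Measure Y) (ps : ℕ → Measure Y), p ∈ Pr r y₀ → (∀ n, ps n ∈ Pr r y₀) →
    WrTendsto r ps p → G p ≤ liminf (fun n => G (ps n)) atTop

/-- (Sequential) upper semicontinuity on `𝒫_r(Y)` w.r.t. `𝒲_r`. -/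
def UscWr1 {Y : Type*} [MeasurableSpace Y] [PseudoMetricSpace Y]
    (r : ℝ) (y₀ : Y) (G : Measure Y → EReal) : Prop :=
  ∀ (p : Measure Y) (ps : ℕ → Measure Y), p ∈ Pr r y₀ → (∀ n, ps n ∈ Pr r y₀) →
    WrTendsto r ps p → limsup (fun n => G (ps n)) atTop ≤ G p

/-- (Sequential) lower semicontinuity on `X × 𝒫_r(Y)` w.r.t. `d_X × 𝒲_r`. -/
def LscWr {X Y : Type*} [TopologicalSpace X] [MeasurableSpace Y] [PseudoMetricSpace Y]
    (r : ℝ) (y₀ : Y) (C : X × Measure Y → EReal) : Prop :=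
  ∀ (x : X) (xs : ℕ → X) (p : Measure Y) (ps : ℕ → Measure Y),
    p ∈ Pr r y₀ → (∀ n, ps n ∈ Pr r y₀) → Tendsto xs atTop (nhds x) → WrTendsto r ps p →
    C (x, p) ≤ liminf (fun n => C (xs n, ps n)) atTop

/-- (Sequential) continuity of a real-valued cost on `X × 𝒫_r(Y)` w.r.t. `d_X × 𝒲_r`. -/
def ContWr {X Y : Type*} [TopologicalSpace X] [MeasurableSpace Y] [PseudoMetricSpace Y]
    (r : ℝ) (y₀ : Y) (C : X × Measure Y → ℝ) : Prop :=
  ∀ (x : X) (xs : ℕ → X) (p : Measure Y) (ps : ℕ → Measure Y),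
    p ∈ Pr r y₀ → (∀ n, ps n ∈ Pr r y₀) → Tendsto xs atTop (nhds x) → WrTendsto r ps p →
    Tendsto (fun n => C (xs n, ps n)) atTop (nhds (C (x, p)))

/-- Convexity of an extended-real-valued function on a set of measures. -/
def EConvexOn {Y : Type*} [MeasurableSpace Y] (S : Set (Measure Y)) (G : Measure Y → EReal) :
    Prop :=
  ∀ p ∈ S, ∀ q ∈ S, ∀ t : ℝ≥0, t ≤ 1 →
    G ((t : ℝ≥0∞) • p + ((1 - t : ℝ≥0) : ℝ≥0∞) • q)
      ≤ ((t : ℝ) : EReal) * G p + (((1 - t : ℝ≥0) : ℝ) : EReal) * G q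

/-- The lower semicontinuous convex envelope (on `𝒫_r(Y)` w.r.t. `𝒲_r`). -/
def cvxEnvWr {Y : Type*} [MeasurableSpace Y] [PseudoMetricSpace Y]
    (r : ℝ) (y₀ : Y) (f : Measure Y → EReal) : Measure Y → EReal :=
  fun p => ⨆ G ∈ {G : Measure Y → EReal |
    LscWr1 r y₀ G ∧ EConvexOn (Pr r y₀) G ∧ ∀ q ∈ Pr r y₀, G q ≤ f q}, G p

/-- The cost `C̃(x,p) = inf {∫ C(x,q) Q(dq) : Q ∈ 𝒫_r(𝒫_r(Y)), I(Q) = p}`. -/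
def tildeC {X Y : Type*} [MeasurableSpace X] [MeasurableSpace Y] [PseudoMetricSpace Y]
    (r : ℝ) (y₀ : Y) (C : X × Measure Y → EReal) : X × Measure Y → EReal :=
  fun xp => ⨅ Q ∈ {Q | Q ∈ PrP r y₀ ∧ intensity Q = xp.2}, eInt (fun q => C (xp.1, q)) Q

/-- The barycenter of a measure on a normed space. -/
def bary {E : Type*} [NormedAddCommGroup E] [NormedSpace ℝ E] [MeasurableSpace E]
    (p : Measure E) : E :=
  ∫ y, y ∂p

/-- Convex order of measures. -/
def ConvexOrder {E : Type*} [NormedAddCommGroup E] [NormedSpace ℝ E] [MeasurableSpace E]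
    (ν' ν : Measure E) : Prop :=
  ∀ θ : E → ℝ, ConvexOn ℝ Set.univ θ →
    eInt (fun y => ((θ y : ℝ) : EReal)) ν' ≤ eInt (fun y => ((θ y : ℝ) : EReal)) ν

/-- The inf-convolution `R_C ψ`. -/
def RC {X Y : Type*} [MeasurableSpace Y] [PseudoMetricSpace Y]
    (r : ℝ) (y₀ : Y) (C : X × Measure Y → EReal) (ψ : Y → ℝ) : X → EReal :=
  fun x => ⨅ p ∈ Pr r y₀, (((-∫ y, ψ y ∂p : ℝ) : EReal) + C (x, p))

/-- `κ` is a regular conditional distribution of `Yv` given the sub-σ-algebra `m1`. -/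
def IsRCD {Ω Y : Type*} [MeasurableSpace Y] (m1 : MeasurableSpace Ω)
    (mΩ : MeasurableSpace Ω) (P : @Measure Ω mΩ) (Yv : Ω → Y) (κ : Ω → Measure Y) : Prop :=
  (∀ ω, IsProbabilityMeasure (κ ω)) ∧ Measurable[m1] κ ∧
    ∀ A : Set Y, MeasurableSet A → ∀ B : Set Ω, MeasurableSet[m1] B →
      P (B ∩ Yv ⁻¹' A) = ∫⁻ ω in B, κ ω A ∂P

end WOT

open WOT

/-!
Write `c(x, y) = C(x, δ_y)`. Jensen's inequality for the law of `δ_Y`, `Y ∼ p`, whose intensity is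
`p`, reads `∫ c(x, y) p(dy) ≤ C(x, p)`. Integrating this against a measure `Q` (or `P`) on measures
turns the left-hand side into the integral of `c` against the intensity of `Q` (or `P`), so no
competitor does better than the classical cost of its intensity. Conversely the push-forward of `p`
(or of a coupling `π`) under `y ↦ δ_y` is a competitor whose cost is exactly that classical cost.
-/

namespace WOT

section EReal

lemma epos_eq_toENNReal : epos = EReal.toENNReal := rfl

lemma epos_sub_epos_neg (g : EReal) : (epos g : EReal) - (epos (-g) : EReal) = g := by
  simp only [epos_eq_toENNReal, EReal.coe_toENNReal_eq_max]
  rcases le_total 0 g with hg | hg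
  · simp [hg]
  · simp [hg]

lemma coe_sub_coe_le_coe_sub_coe_iff {a b c d : ℝ≥0∞} (hb : b ≠ ⊤) (hd : d ≠ ⊤) :
    (a : EReal) - b ≤ (c : EReal) - d ↔ a + d ≤ c + b := by
  rw [EReal.le_sub_iff_add_le (by simp) (by simp [hd]), sub_eq_add_neg, add_right_comm,
    ← sub_eq_add_neg, EReal.sub_le_iff_le_add (by simp) (by simp [hb])]
  norm_cast

lemma epos_neg_le_of_coe_sub_coe_le {a b : ℝ≥0∞} {g : EReal} (h : (a : EReal) - b ≤ g) :
    epos (-g) ≤ b := by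
  have hle : -g ≤ b := by
    rw [EReal.neg_le]
    refine le_trans ?_ h
    rw [sub_eq_add_neg]
    exact le_add_of_nonneg_left (EReal.coe_ennreal_nonneg a)
  simpa only [epos_eq_toENNReal, EReal.toENNReal_coe] using EReal.toENNReal_le_toENNReal hle

end EReal

section Integral

variable {A B : Type*} [MeasurableSpace A] [MeasurableSpace B]

lemma aemeasurable_epos_comp {f : A → EReal} {m : Measure A} (hf : AEMeasurable f m) :
    AEMeasurable (fun a => epos (f a)) m :=
  measurable_ereal_toENNReal.comp_aemeasurable hf

lemma aemeasurable_epos_neg_comp {f : A → EReal} {m : Measure A} (hf : AEMeasurable f m) :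
    AEMeasurable (fun a => epos (-(f a))) m :=
  aemeasurable_epos_comp hf.neg

lemma eInt_map {f : B → EReal} {g : A → B} {m : Measure A} (hf : AEMeasurable f (m.map g))
    (hg : AEMeasurable g m) : eInt f (m.map g) = eInt (fun a => f (g a)) m := by
  unfold eInt
  rw [lintegral_map' (aemeasurable_epos_comp hf) hg,
    lintegral_map' (aemeasurable_epos_neg_comp hf) hg]

lemma eInt_bind_le {P : Measure A} {k : A → Measure B} {f : B → EReal} {g : A → EReal}
    (hk : AEMeasurable k P) (hf : AEMeasurable f (P.bind k)) (hg : AEMeasurable g P)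
    (hle : ∀ᵐ a ∂P, eInt f (k a) ≤ g a) (hfin : ∫⁻ b, epos (-(f b)) ∂(P.bind k) ≠ ⊤) :
    eInt f (P.bind k) ≤ eInt g P := by
  have hf_neg := aemeasurable_epos_neg_comp hf
  have hneg_meas : AEMeasurable (fun a => ∫⁻ b, epos (-(f b)) ∂(k a)) P :=
    (Measure.aemeasurable_lintegral hf_neg).comp_aemeasurable hk
  unfold eInt at hle ⊢
  rw [Measure.lintegral_bind hk hf_neg] at hfin ⊢
  rw [Measure.lintegral_bind hk (aemeasurable_epos_comp hf)]
  have hg_neg_le : ∀ᵐ a ∂P, epos (-(g a)) ≤ ∫⁻ b, epos (-(f b)) ∂(k a) :=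
    hle.mono fun a => epos_neg_le_of_coe_sub_coe_le
  have hadd_le : ∀ᵐ a ∂P, (∫⁻ b, epos (f b) ∂(k a)) + epos (-(g a))
      ≤ epos (g a) + ∫⁻ b, epos (-(f b)) ∂(k a) := by
    filter_upwards [hle, hg_neg_le, ae_lt_top' hneg_meas hfin] with a ha hga hfina
    rwa [← coe_sub_coe_le_coe_sub_coe_iff hfina.ne (hga.trans_lt hfina).ne, epos_sub_epos_neg]
  rw [coe_sub_coe_le_coe_sub_coe_iff hfin
      (ne_top_of_le_ne_top hfin (lintegral_mono_ae hg_neg_le)),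
    ← lintegral_add_right' _ (aemeasurable_epos_neg_comp hg), ← lintegral_add_right' _ hneg_meas]
  exact lintegral_mono_ae hadd_le

lemma lintegral_epos_neg_ne_top {m : Measure A} {c : A → EReal} {h : A → ℝ} (hh : Integrable h m)
    (hle : ∀ a, ((-h a : ℝ) : EReal) ≤ c a) : ∫⁻ a, epos (-(c a)) ∂m ≠ ⊤ := by
  refine ne_top_of_le_ne_top hh.lintegral_lt_top.ne (lintegral_mono fun a => ?_)
  have hneg : -(c a) ≤ (h a : EReal) := by
    rw [EReal.neg_le]
    exact_mod_cast hle a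
  exact EReal.toENNReal_le_toENNReal hneg

end Integral

section Wasserstein

variable {Y : Type*} [MeasurableSpace Y] [PseudoMetricSpace Y] {r : ℝ} {y₀ : Y}

lemma Wr_dirac_rpow_le (hr : 0 < r) (p : Measure Y) [IsProbabilityMeasure p] :
    Wr r p (Measure.dirac y₀) ^ r ≤ ∫⁻ y, ENNReal.ofReal (dist y y₀ ^ r) ∂p := by
  have hcoupling : p.map (fun y => (y, y₀)) ∈ Couplings p (Measure.dirac y₀) := by
    rw [← Measure.prod_dirac]
    exact ⟨by simp [Measure.map_fst_prod], by simp [Measure.map_snd_prod]⟩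
  rw [← ENNReal.le_rpow_inv_iff hr, ← one_div]
  refine (iInf₂_le _ hcoupling).trans ?_
  gcongr
  exact lintegral_map_le _ _

variable [OpensMeasurableSpace Y]

lemma measurable_dist_rpow (r : ℝ) (y₀ : Y) : Measurable fun y => dist y y₀ ^ r :=
  (continuous_id.dist continuous_const).measurable.pow_const r

lemma FinMom.integrable {p : Measure Y} (hp : FinMom r y₀ p) :
    Integrable (fun y => dist y y₀ ^ r) p :=
  ⟨(measurable_dist_rpow r y₀).aestronglyMeasurable,
    (hasFiniteIntegral_iff_ofReal (.of_forall fun _ => by positivity)).2 hp⟩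

lemma measurableSet_Pr (r : ℝ) (y₀ : Y) : MeasurableSet (Pr r y₀) :=
  ProbabilityMeasure.measurableSet_isProbabilityMeasure.inter <|
    measurableSet_lt (Measure.measurable_lintegral (measurable_dist_rpow r y₀).ennreal_ofReal)
      measurable_const

lemma lintegral_dirac_dist_rpow (r : ℝ) (y₀ y : Y) :
    ∫⁻ z, ENNReal.ofReal (dist z y₀ ^ r) ∂(Measure.dirac y) = ENNReal.ofReal (dist y y₀ ^ r) :=
  lintegral_dirac' y (measurable_dist_rpow r y₀).ennreal_ofReal

lemma dirac_mem_Pr (r : ℝ) (y₀ y : Y) : Measure.dirac y ∈ Pr r y₀ :=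
  ⟨inferInstance, (lintegral_dirac_dist_rpow r y₀ y).trans_lt ENNReal.ofReal_lt_top⟩

lemma Wr_dirac_dirac_rpow_le (hr : 0 < r) (y : Y) :
    Wr r (Measure.dirac y) (Measure.dirac y₀) ^ r ≤ ENNReal.ofReal (dist y y₀ ^ r) :=
  (Wr_dirac_rpow_le hr _).trans_eq (lintegral_dirac_dist_rpow r y₀ y)

lemma map_dirac_mem_PrP (hr : 0 < r) {p : Measure Y} (hp : p ∈ Pr r y₀) :
    p.map Measure.dirac ∈ PrP r y₀ := by
  have hprob := hp.1
  refine ⟨Measure.isProbabilityMeasure_map Measure.measurable_dirac.aemeasurable, ?_, ?_⟩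
  · exact (ae_map_iff Measure.measurable_dirac.aemeasurable (measurableSet_Pr r y₀)).2
      (.of_forall (dirac_mem_Pr r y₀))
  · calc ∫⁻ q, Wr r q (Measure.dirac y₀) ^ r ∂(p.map Measure.dirac)
        ≤ ∫⁻ y, Wr r (Measure.dirac y) (Measure.dirac y₀) ^ r ∂p := lintegral_map_le _ _
      _ ≤ ∫⁻ y, ENNReal.ofReal (dist y y₀ ^ r) ∂p :=
          lintegral_mono (Wr_dirac_dirac_rpow_le hr)
      _ < ⊤ := hp.2

lemma neg_le_dirac_of_neg_Wr_rpow_le (hr : 0 < r) {G : Measure Y → EReal} {K a : ℝ} (ha : 0 ≤ a)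
    (hG : ∀ p ∈ Pr r y₀,
      ((-(K * (a + (Wr r p (Measure.dirac y₀) ^ r).toReal)) : ℝ) : EReal) ≤ G p) (y : Y) :
    ((-(|K| * (a + dist y y₀ ^ r)) : ℝ) : EReal) ≤ G (Measure.dirac y) := by
  refine le_trans (EReal.coe_le_coe_iff.2 (neg_le_neg ?_)) (hG _ (dirac_mem_Pr r y₀ y))
  have hW : (Wr r (Measure.dirac y) (Measure.dirac y₀) ^ r).toReal ≤ dist y y₀ ^ r :=
    ENNReal.toReal_le_of_le_ofReal (by positivity) (Wr_dirac_dirac_rpow_le hr y)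
  gcongr
  exact le_abs_self K

end Wasserstein

section Jensen

variable {Y : Type*} [MeasurableSpace Y]

lemma intensity_map_dirac (p : Measure Y) : intensity (p.map Measure.dirac) = p :=
  Measure.join_map_dirac p

lemma eInt_map_dirac {G : Measure Y → EReal} (hG : Measurable G) (p : Measure Y) :
    eInt G (p.map Measure.dirac) = eInt (fun y => G (Measure.dirac y)) p :=
  eInt_map hG.aemeasurable Measure.measurable_dirac.aemeasurable

lemma eInt_dirac_intensity_le {G : Measure Y → EReal} (hG : Measurable G) {Q : Measure (Measure Y)}
    (hjensen : ∀ᵐ q ∂Q, eInt (fun y => G (Measure.dirac y)) q ≤ G q)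
    (hfin : ∫⁻ y, epos (-(G (Measure.dirac y))) ∂(intensity Q) ≠ ⊤) :
    eInt (fun y => G (Measure.dirac y)) (intensity Q) ≤ eInt G Q := by
  rw [intensity, Measure.join_eq_bind] at hfin ⊢
  exact eInt_bind_le aemeasurable_id (hG.comp Measure.measurable_dirac).aemeasurable
    hG.aemeasurable hjensen hfin

variable [PseudoMetricSpace Y] [OpensMeasurableSpace Y] {r : ℝ} {y₀ : Y}

lemma eInt_dirac_le_of_jensen (hr : 0 < r) {G : Measure Y → EReal} (hG : Measurable G)
    (hjensen : ∀ Q ∈ PrP r y₀, eInt G Q ≤ G (intensity Q)) {p : Measure Y} (hp : p ∈ Pr r y₀) :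
    eInt (fun y => G (Measure.dirac y)) p ≤ G p := by
  simpa only [eInt_map_dirac hG, intensity_map_dirac]
    using hjensen (p.map Measure.dirac) (map_dirac_mem_PrP hr hp)

lemma tildeC_eq_eInt_dirac {X : Type*} [MeasurableSpace X] (hr : 0 < r)
    {C : X × Measure Y → EReal} {x : X} (hC : Measurable fun q => C (x, q))
    (hjensen : ∀ q ∈ Pr r y₀, eInt (fun y => C (x, Measure.dirac y)) q ≤ C (x, q))
    {p : Measure Y} (hp : p ∈ Pr r y₀) (hfin : ∫⁻ y, epos (-(C (x, Measure.dirac y))) ∂p ≠ ⊤) :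
    tildeC r y₀ C (x, p) = eInt (fun y => C (x, Measure.dirac y)) p := by
  refine le_antisymm ?_ (le_iInf₂ ?_)
  · exact iInf₂_le_of_le (p.map Measure.dirac) ⟨map_dirac_mem_PrP hr hp, intensity_map_dirac p⟩
      (eInt_map_dirac hC p).le
  · rintro Q ⟨hQ, rfl⟩
    exact eInt_dirac_intensity_le hC (hQ.2.1.mono hjensen) hfin

end Jensen

section Transport

variable {X Y : Type*} [MeasurableSpace X] [MeasurableSpace Y]

lemma isProbabilityMeasure_of_mem_Couplings {μ : Measure X} [hμ : IsProbabilityMeasure μ]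
    {ν : Measure Y} {π : Measure (X × Y)} (hπ : π ∈ Couplings μ ν) : IsProbabilityMeasure π := by
  rw [← hπ.1] at hμ
  exact Measure.isProbabilityMeasure_of_map Prod.fst

lemma aemeasurable_dirac_prod {P : Measure (X × Measure Y)}
    (hP : ∀ᵐ xp ∂P, IsProbabilityMeasure xp.2) :
    AEMeasurable (fun xp : X × Measure Y => (Measure.dirac xp.1).prod xp.2) P := by
  let S : Set (X × Measure Y) := {xp | IsProbabilityMeasure xp.2}
  have hS : MeasurableSet S :=
    measurable_snd ProbabilityMeasure.measurableSet_isProbabilityMeasure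
  rw [← Measure.restrict_eq_self_of_ae_mem (s := S) hP]
  refine aemeasurable_restrict_of_measurable_subtype hS ?_
  have hdirac : Measurable fun xp : S =>
      (⟨Measure.dirac xp.1.1, inferInstance⟩ : ProbabilityMeasure X) :=
    (Measure.measurable_dirac.comp (measurable_fst.comp measurable_subtype_coe)).subtype_mk
  have hsnd : Measurable fun xp : S => (⟨xp.1.2, xp.2⟩ : ProbabilityMeasure Y) :=
    (measurable_snd.comp measurable_subtype_coe).subtype_mk
  exact ProbabilityMeasure.measurable_fun_prod.comp (hdirac.prodMk hsnd)

lemma lintegral_intensityHat {P : Measure (X × Measure Y)}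
    (hP : ∀ᵐ xp ∂P, IsProbabilityMeasure xp.2) {f : X × Y → ℝ≥0∞} (hf : Measurable f) :
    ∫⁻ z, f z ∂(intensityHat P) = ∫⁻ xp, ∫⁻ y, f (xp.1, y) ∂xp.2 ∂P := by
  rw [intensityHat, Measure.lintegral_bind (aemeasurable_dirac_prod hP) hf.aemeasurable]
  refine lintegral_congr_ae (hP.mono fun xp _ => ?_)
  simp only [Measure.dirac_prod, lintegral_map hf measurable_prodMk_left]

lemma measurable_prodMap_dirac :
    Measurable (Prod.map id Measure.dirac : X × Y → X × Measure Y) :=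
  measurable_id.prodMap Measure.measurable_dirac

lemma ae_isProbabilityMeasure_map_dirac (π : Measure (X × Y)) :
    ∀ᵐ xp ∂(π.map (Prod.map id Measure.dirac)), IsProbabilityMeasure xp.2 :=
  (ae_map_iff measurable_prodMap_dirac.aemeasurable
    (measurable_snd ProbabilityMeasure.measurableSet_isProbabilityMeasure)).2
    (.of_forall fun _ => Measure.dirac.isProbabilityMeasure)

lemma intensityHat_map_dirac (π : Measure (X × Y)) :
    intensityHat (π.map (Prod.map id Measure.dirac)) = π := by
  rw [intensityHat, Measure.bind, AEMeasurable.map_map_of_aemeasurable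
    (aemeasurable_dirac_prod (ae_isProbabilityMeasure_map_dirac π))
    measurable_prodMap_dirac.aemeasurable]
  simp only [Function.comp_def, Prod.map, id, Measure.dirac_prod_dirac]
  exact Measure.join_map_dirac π

lemma map_dirac_mem_Lambda {μ : Measure X} [IsProbabilityMeasure μ] {ν : Measure Y}
    {π : Measure (X × Y)} (hπ : π ∈ Couplings μ ν) :
    π.map (Prod.map id Measure.dirac) ∈ Lambda μ ν := by
  have := isProbabilityMeasure_of_mem_Couplings hπ
  exact ⟨Measure.isProbabilityMeasure_map measurable_prodMap_dirac.aemeasurable,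
    ae_isProbabilityMeasure_map_dirac π, by rwa [intensityHat_map_dirac]⟩

lemma eInt_dirac_intensityHat_le {C : X × Measure Y → EReal} (hC : Measurable C)
    {P : Measure (X × Measure Y)} (hP : ∀ᵐ xp ∂P, IsProbabilityMeasure xp.2)
    (hjensen : ∀ᵐ xp ∂P, eInt (fun y => C (xp.1, Measure.dirac y)) xp.2 ≤ C xp)
    (hfin : ∫⁻ z, epos (-(C (z.1, Measure.dirac z.2))) ∂(intensityHat P) ≠ ⊤) :
    eInt (fun z => C (z.1, Measure.dirac z.2)) (intensityHat P) ≤ eInt C P := by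
  have hc : Measurable fun z : X × Y => C (z.1, Measure.dirac z.2) :=
    hC.comp measurable_prodMap_dirac
  refine eInt_bind_le (aemeasurable_dirac_prod hP) hc.aemeasurable hC.aemeasurable ?_ hfin
  filter_upwards [hP, hjensen] with xp _ hle
  rwa [Measure.dirac_prod, eInt_map hc.aemeasurable measurable_prodMk_left.aemeasurable]

variable [PseudoMetricSpace Y] [OpensMeasurableSpace Y] {r : ℝ} {y₀ : Y}

lemma ae_mem_Pr_of_mem_Lambda {μ : Measure X} {ν : Measure Y} (hν : FinMom r y₀ ν)
    {P : Measure (X × Measure Y)} (hP : P ∈ Lambda μ ν) : ∀ᵐ xp ∂P, xp.2 ∈ Pr r y₀ := by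
  have hdist : Measurable fun y : Y => ENNReal.ofReal (dist y y₀ ^ r) :=
    (measurable_dist_rpow r y₀).ennreal_ofReal
  have hfin : ∫⁻ xp, ∫⁻ y, ENNReal.ofReal (dist y y₀ ^ r) ∂xp.2 ∂P < ⊤ := by
    rwa [FinMom, ← hP.2.2.2, lintegral_map hdist measurable_snd,
      lintegral_intensityHat (f := fun z => ENNReal.ofReal (dist z.2 y₀ ^ r)) hP.2.1
        (hdist.comp measurable_snd)] at hν
  have hmeas : Measurable fun xp : X × Measure Y =>
      ∫⁻ y, ENNReal.ofReal (dist y y₀ ^ r) ∂xp.2 :=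
    (Measure.measurable_lintegral hdist).comp measurable_snd
  filter_upwards [hP.2.1, ae_lt_top hmeas hfin.ne] with xp hprob hmom
  exact ⟨hprob, hmom⟩

lemma sInf_eInt_Lambda_eq_sInf_eInt_Couplings {μ : Measure X} [IsProbabilityMeasure μ]
    {ν : Measure Y} (hν : FinMom r y₀ ν) {C : X × Measure Y → EReal} (hC : Measurable C)
    (hjensen : ∀ x, ∀ q ∈ Pr r y₀, eInt (fun y => C (x, Measure.dirac y)) q ≤ C (x, q))
    (hfin : ∀ π ∈ Couplings μ ν, ∫⁻ z, epos (-(C (z.1, Measure.dirac z.2))) ∂π ≠ ⊤) :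
    sInf {v : EReal | ∃ P ∈ Lambda μ ν, v = eInt C P}
      = sInf {v : EReal | ∃ π ∈ Couplings μ ν,
          v = eInt (fun z => C (z.1, Measure.dirac z.2)) π} := by
  refine le_antisymm (le_sInf ?_) (le_sInf ?_)
  · rintro _ ⟨π, hπ, rfl⟩
    exact sInf_le ⟨π.map (Prod.map id Measure.dirac), map_dirac_mem_Lambda hπ,
      (eInt_map hC.aemeasurable measurable_prodMap_dirac.aemeasurable).symm⟩
  · rintro _ ⟨P, hP, rfl⟩
    refine sInf_le_of_le ⟨intensityHat P, hP.2.2, rfl⟩ ?_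
    exact eInt_dirac_intensityHat_le hC hP.2.1
      ((ae_mem_Pr_of_mem_Lambda hν hP).mono fun xp => hjensen xp.1 xp.2) (hfin _ hP.2.2)

lemma integrable_growth_of_mem_Couplings [PseudoMetricSpace X] [OpensMeasurableSpace X] {x₀ : X}
    {μ : Measure X} [IsProbabilityMeasure μ] {ν : Measure Y} (hμ : FinMom r x₀ μ)
    (hν : FinMom r y₀ ν) {π : Measure (X × Y)} (hπ : π ∈ Couplings μ ν) (K : ℝ) :
    Integrable (fun z => K * (1 + dist z.1 x₀ ^ r + dist z.2 y₀ ^ r)) π := by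
  have := isProbabilityMeasure_of_mem_Couplings hπ
  rw [← hπ.1] at hμ
  rw [← hπ.2] at hν
  exact (((integrable_const 1).add (hμ.integrable.comp_measurable measurable_fst)).add
    (hν.integrable.comp_measurable measurable_snd)).const_mul K

end Transport

end WOT

theorem statement11_general {X Y : Type*}
    [MeasurableSpace X] [PseudoMetricSpace X] [OpensMeasurableSpace X]
    [MeasurableSpace Y] [PseudoMetricSpace Y] [OpensMeasurableSpace Y]
    (r : ℝ) (hr : 0 < r) (x₀ : X) (y₀ : Y)
    (μ : Measure X) (ν : Measure Y) [IsProbabilityMeasure μ]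
    (hμ : FinMom r x₀ μ) (hν : FinMom r y₀ ν)
    (C : X × Measure Y → EReal) (hC : Measurable C) (K : ℝ)
    (hlb : ∀ x y, ((-(K * (1 + dist x x₀ ^ r + dist y y₀ ^ r)) : ℝ) : EReal)
      ≤ C (x, Measure.dirac y))
    (hJensen : ∀ x, ∀ p ∈ Pr r y₀, eInt (fun y => C (x, Measure.dirac y)) p ≤ C (x, p)) :
    (∀ x, ∀ p ∈ Pr r y₀,
      tildeC r y₀ C (x, p) = eInt (fun y => C (x, Measure.dirac y)) p) ∧
    sInf {v : EReal | ∃ P ∈ Lambda μ ν, v = eInt C P}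
      = sInf {v : EReal | ∃ π ∈ Couplings μ ν,
          v = eInt (fun z => C (z.1, Measure.dirac z.2)) π} := by
  constructor
  · intro x p hp
    have := hp.1
    have hgrowth : Integrable (fun y => K * (1 + dist x x₀ ^ r + dist y y₀ ^ r)) p :=
      ((integrable_const _).add hp.2.integrable).const_mul K
    exact tildeC_eq_eInt_dirac hr (hC.comp measurable_prodMk_left) (hJensen x) hp
      (lintegral_epos_neg_ne_top hgrowth (hlb x))
  · exact sInf_eInt_Lambda_eq_sInf_eInt_Couplings hν hC hJensen fun π hπ =>
      lintegral_epos_neg_ne_top (integrable_growth_of_mem_Couplings hμ hν hπ K)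
        fun z => hlb z.1 z.2

/-- for costs satisfying Jensen's inequality (concave-type costs), the
relaxed weak transport problem reduces to a classical optimal transport problem
(Remark `rem:convexify`). -/
theorem statement11 {X Y : Type*}
    [MeasurableSpace X] [MetricSpace X] [CompleteSpace X] [SecondCountableTopology X]
    [BorelSpace X]
    [MeasurableSpace Y] [MetricSpace Y] [CompleteSpace Y] [SecondCountableTopology Y]
    [BorelSpace Y]
    (r : ℝ) (hr : 1 ≤ r) (x₀ : X) (y₀ : Y)
    (μ : Measure X) (ν : Measure Y) [IsProbabilityMeasure μ] [IsProbabilityMeasure ν]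
    (hμ : FinMom r x₀ μ) (hν : FinMom r y₀ ν)
    (C : X × Measure Y → EReal) (hC : Measurable C) (K : ℝ)
    (hlb : ∀ x, ∀ p ∈ Pr r y₀,
      ((-(K * (1 + dist x x₀ ^ r + (Wr r p (Measure.dirac y₀) ^ r).toReal)) : ℝ) : EReal)
        ≤ C (x, p))
    (hJensen : ∀ x, ∀ Q ∈ PrP r y₀, eInt (fun q => C (x, q)) Q ≤ C (x, intensity Q)) :
    (∀ x, ∀ p ∈ Pr r y₀,
      tildeC r y₀ C (x, p) = eInt (fun y => C (x, Measure.dirac y)) p) ∧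
    sInf {v : EReal | ∃ P ∈ Lambda μ ν, v = eInt C P}
      = sInf {v : EReal | ∃ π ∈ Couplings μ ν,
          v = eInt (fun z => C (z.1, Measure.dirac z.2)) π} := by
  have hr₀ : 0 < r := by linarith
  exact statement11_general r hr₀ x₀ y₀ μ ν hμ hν C hC |K|
    (fun x => neg_le_dirac_of_neg_Wr_rpow_le hr₀ (by positivity) (hlb x))
    (fun x _ => eInt_dirac_le_of_jensen hr₀ (hC.comp measurable_prodMk_left) (hJensen x))
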